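/- arXiv:2010.09833 — 5 statements merged into one kernel-verified Lean document; each statement's English description precedes it below -/
import Mathlib

section
/- Let μ₁ and μ₂ be probability measures on a measurable space (E, ℰ) that are both absolutely continuous with respect to a σ-finite measure ν, and let D′ ∈ ℰ. Then ∫_{D′} min(dμ₁/dμ₂, 1) dμ₂ ≥ ∫_{D′} min(dμ₁/dν, dμ₂/dν) dν, where dμ₁/dμ₂ denotes the Radon–Nikodym derivative of the absolutely continuous part of μ₁ with respect to μ₂, and dμᵢ/dν are the Radon–Nikodym densities. In particular, positivity of the right-hand side (the dominated form of the Markov–Dobrushin constant) is sufficient for the local Markov–Dobrushin condition. -/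
open MeasureTheory
open scoped ENNReal

/-! Both integrands are densities of measures. The measure `min(dμ₁/dμ₂, 1) μ₂` is the infimum
`μ₁ ⊓ μ₂` in the lattice of measures, because the part of `μ₁` singular to `μ₂` does not contribute
to this infimum. The measure `min(dμ₁/dν, dμ₂/dν) ν` is a lower bound of `μ₁` and of `μ₂`, since
`(dμᵢ/dν) ν ≤ μᵢ`, and hence lies below the infimum. -/

section Infimum

variable {E : Type*} [MeasurableSpace E]

theorem inf_apply_le_add (μ ν : Measure E) {s : Set E} (hs : MeasurableSet s) (t : Set E) :
    (μ ⊓ ν) s ≤ μ (t ∩ s) + ν (tᶜ ∩ s) := by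
  rw [Measure.inf_apply hs]
  exact sInf_le ⟨t, rfl⟩

theorem withDensity_min (μ : Measure E) {f g : E → ℝ≥0∞} (hf : Measurable f) (hg : Measurable g) :
    μ.withDensity (fun x ↦ min (f x) (g x)) = μ.withDensity f ⊓ μ.withDensity g := by
  refine le_antisymm (le_inf ?_ ?_) (Measure.le_iff.2 fun s hs ↦ ?_)
  · exact withDensity_mono <| ae_of_all _ fun _ ↦ min_le_left _ _
  · exact withDensity_mono <| ae_of_all _ fun _ ↦ min_le_right _ _
  set t := {x | f x ≤ g x}
  have ht : MeasurableSet t := measurableSet_le hf hg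
  have hf_min : μ.withDensity f (t ∩ s) = μ.withDensity (fun x ↦ min (f x) (g x)) (t ∩ s) := by
    rw [withDensity_apply _ (ht.inter hs), withDensity_apply _ (ht.inter hs)]
    exact setLIntegral_congr_fun (ht.inter hs) fun x hx ↦ (min_eq_left hx.1).symm
  have hg_min : μ.withDensity g (tᶜ ∩ s) = μ.withDensity (fun x ↦ min (f x) (g x)) (tᶜ ∩ s) := by
    rw [withDensity_apply _ (ht.compl.inter hs), withDensity_apply _ (ht.compl.inter hs)]
    exact setLIntegral_congr_fun (ht.compl.inter hs) fun x hx ↦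
      (min_eq_right (le_of_not_ge (Set.notMem_ofPred_iff.1 hx.1))).symm
  calc (μ.withDensity f ⊓ μ.withDensity g) s
      ≤ μ.withDensity f (t ∩ s) + μ.withDensity g (tᶜ ∩ s) := inf_apply_le_add _ _ hs t
    _ = μ.withDensity (fun x ↦ min (f x) (g x)) s := by
        rw [hf_min, hg_min, Set.inter_comm t, Set.inter_comm tᶜ, ← Set.sdiff_eq,
          measure_inter_add_sdiff s ht]

theorem add_inf_eq_of_mutuallySingular {ξ ν : Measure E} (μ : Measure E) (h : ξ ⟂ₘ ν) :
    (ξ + μ) ⊓ ν = μ ⊓ ν := by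
  refine le_antisymm (le_inf (Measure.le_iff.2 fun s hs ↦ ?_) inf_le_right)
    (inf_le_inf_right ν (Measure.le_add_left le_rfl))
  have hξ : ξ (h.nullSet ∩ s) = 0 := measure_inter_null_of_null_left s h.measure_nullSet
  have hν : ν (h.nullSetᶜ ∩ s) = 0 := measure_inter_null_of_null_left s h.measure_compl_nullSet
  calc ((ξ + μ) ⊓ ν) s
      ≤ (ξ + μ) (h.nullSet ∩ s) + ν (h.nullSetᶜ ∩ s) := inf_apply_le_add _ _ hs h.nullSet
    _ = μ (h.nullSet ∩ s) := by rw [Measure.add_apply, hξ, hν, zero_add, add_zero]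
    _ ≤ μ s := measure_mono Set.inter_subset_right

theorem withDensity_min_rnDeriv_one (μ ν : Measure E) [μ.HaveLebesgueDecomposition ν] :
    ν.withDensity (fun x ↦ min (μ.rnDeriv ν x) 1) = μ ⊓ ν :=
  calc ν.withDensity (fun x ↦ min (μ.rnDeriv ν x) 1)
      = ν.withDensity (μ.rnDeriv ν) ⊓ ν.withDensity 1 :=
        withDensity_min ν (Measure.measurable_rnDeriv μ ν) measurable_one
    _ = ν.withDensity (μ.rnDeriv ν) ⊓ ν := by rw [withDensity_one]
    _ = (μ.singularPart ν + ν.withDensity (μ.rnDeriv ν)) ⊓ ν :=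
        (add_inf_eq_of_mutuallySingular _ (μ.mutuallySingular_singularPart ν)).symm
    _ = μ ⊓ ν := by rw [Measure.singularPart_add_rnDeriv]

theorem withDensity_min_rnDeriv_le_inf (μ₁ μ₂ ν : Measure E) :
    ν.withDensity (fun x ↦ min (μ₁.rnDeriv ν x) (μ₂.rnDeriv ν x)) ≤ μ₁ ⊓ μ₂ := by
  rw [withDensity_min ν (Measure.measurable_rnDeriv μ₁ ν) (Measure.measurable_rnDeriv μ₂ ν)]
  exact inf_le_inf (μ₁.withDensity_rnDeriv_le ν) (μ₂.withDensity_rnDeriv_le ν)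

end Infimum

theorem markov_dobrushin_dominated_lower_bound_general
    {E : Type*} [MeasurableSpace E] (μ₁ μ₂ ν : Measure E) [SFinite μ₂]
    [μ₁.HaveLebesgueDecomposition μ₂] [μ₁.HaveLebesgueDecomposition ν]
    [μ₂.HaveLebesgueDecomposition ν] (D' : Set E) :
    ∫⁻ x in D', min (μ₁.rnDeriv ν x) (μ₂.rnDeriv ν x) ∂ν ≤
      ∫⁻ x in D', min (μ₁.rnDeriv μ₂ x) 1 ∂μ₂ :=
  calc ∫⁻ x in D', min (μ₁.rnDeriv ν x) (μ₂.rnDeriv ν x) ∂ν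
      ≤ ν.withDensity (fun x ↦ min (μ₁.rnDeriv ν x) (μ₂.rnDeriv ν x)) D' :=
        withDensity_apply_le _ D'
    _ ≤ (μ₁ ⊓ μ₂) D' := withDensity_min_rnDeriv_le_inf μ₁ μ₂ ν D'
    _ = μ₂.withDensity (fun x ↦ min (μ₁.rnDeriv μ₂ x) 1) D' := by
        rw [withDensity_min_rnDeriv_one]
    _ = ∫⁻ x in D', min (μ₁.rnDeriv μ₂ x) 1 ∂μ₂ := withDensity_apply' _ D'

/-- If `μ₁, μ₂ ≪ ν` with `ν` σ-finite, then for every measurable set `D'` the local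
Markov–Dobrushin overlap `∫_{D'} min(dμ₁/dμ₂, 1) dμ₂` is bounded below by the dominated form
`∫_{D'} min(dμ₁/dν, dμ₂/dν) dν`. In particular, positivity of the latter suffices for the
local Markov–Dobrushin condition. -/
theorem markov_dobrushin_dominated_lower_bound
    {E : Type*} [MeasurableSpace E]
    (μ₁ μ₂ ν : Measure E) [IsProbabilityMeasure μ₁] [IsProbabilityMeasure μ₂]
    [SigmaFinite ν] (h₁ : μ₁ ≪ ν) (h₂ : μ₂ ≪ ν)
    {D' : Set E} (hD' : MeasurableSet D') :
    ∫⁻ x in D', min (μ₁.rnDeriv ν x) (μ₂.rnDeriv ν x) ∂ν ≤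
      ∫⁻ x in D', min (μ₁.rnDeriv μ₂ x) 1 ∂μ₂ :=
  markov_dobrushin_dominated_lower_bound_general μ₁ μ₂ ν D'
end

section
/- Let μ₁ and μ₂ be finite measures on a measurable space (E, ℰ) and let Γ ∈ ℰ. Suppose that the restriction of μ₁ to Γ is absolutely continuous with respect to the restriction of μ₂ to Γ, with density f = dμ₁/dμ₂ satisfying f ≤ N μ₂-almost everywhere on Γ for some constant N > 0. Then the absolutely continuous part μ̃₂ of μ₂ with respect to μ₁ satisfies dμ̃₂/dμ₁ ≥ 1/N μ₁-almost everywhere on Γ. -/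
open MeasureTheory
open scoped ENNReal

/-! The density bound says exactly that `μ₁` restricted to `Γ` is at most `N • μ₂`, so the measure
with density `N⁻¹ 1_Γ` with respect to `μ₁` is at most `μ₂`. Among all densities of measures below
`μ₂`, `dμ̃₂/dμ₁` is the largest: the singular part of `μ₂` contributes nothing to an upper bound for
an absolutely continuous measure. -/

section

variable {α : Type*} {mα : MeasurableSpace α} {μ ν : Measure α}

theorem le_of_le_add_of_mutuallySingular {ξ : Measure α} (h : μ ≤ ξ + ν) (hμξ : μ ⟂ₘ ξ) :
    μ ≤ ν :=
  calc
    μ = μ.restrict hμξ.nullSetᶜ := by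
      rw [← zero_add (μ.restrict hμξ.nullSetᶜ), ← hμξ.restrict_nullSet,
        Measure.restrict_add_restrict_compl hμξ.measurableSet_nullSet]
    _ ≤ (ξ + ν).restrict hμξ.nullSetᶜ := Measure.restrict_mono_measure h _
    _ = ν.restrict hμξ.nullSetᶜ := by
      rw [Measure.restrict_add, hμξ.restrict_compl_nullSet, zero_add]
    _ ≤ ν := Measure.restrict_le_self

theorem withDensity_le_withDensity_rnDeriv [ν.HaveLebesgueDecomposition μ] {f : α → ℝ≥0∞}
    (h : μ.withDensity f ≤ ν) : μ.withDensity f ≤ μ.withDensity (ν.rnDeriv μ) := by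
  refine le_of_le_add_of_mutuallySingular (ξ := ν.singularPart μ) ?_ ?_
  · rwa [Measure.singularPart_add_rnDeriv]
  · exact (Measure.mutuallySingular_singularPart ν μ).symm.mono_ac
      (withDensity_absolutelyContinuous μ f) .rfl

theorem ae_le_of_withDensity_le_withDensity [SigmaFinite μ] {f g : α → ℝ≥0∞}
    (hf : AEMeasurable f μ) (h : μ.withDensity f ≤ μ.withDensity g) : f ≤ᵐ[μ] g :=
  ae_le_of_forall_setLIntegral_le_of_sigmaFinite₀ hf fun s hs _ ↦ by
    simpa only [withDensity_apply _ hs] using h s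

theorem le_rnDeriv_of_withDensity_le [SigmaFinite μ] [ν.HaveLebesgueDecomposition μ]
    {f : α → ℝ≥0∞} (hf : AEMeasurable f μ) (h : μ.withDensity f ≤ ν) : f ≤ᵐ[μ] ν.rnDeriv μ :=
  ae_le_of_withDensity_le_withDensity hf (withDensity_le_withDensity_rnDeriv h)

theorem le_smul_of_rnDeriv_le [μ.HaveLebesgueDecomposition ν] {c : ℝ≥0∞} (hμν : μ ≪ ν)
    (h : ∀ᵐ x ∂ν, μ.rnDeriv ν x ≤ c) : μ ≤ c • ν :=
  calc
    μ = ν.withDensity (μ.rnDeriv ν) := (Measure.withDensity_rnDeriv_eq μ ν hμν).symm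
    _ ≤ ν.withDensity fun _ ↦ c := withDensity_mono h
    _ = c • ν := withDensity_const c

theorem inv_smul_le_of_le_smul {c : ℝ≥0∞} (h : μ ≤ c • ν) : c⁻¹ • μ ≤ ν :=
  calc
    c⁻¹ • μ ≤ c⁻¹ • c • ν := by gcongr
    _ = (c⁻¹ * c) • ν := smul_smul _ _ _
    _ ≤ (1 : ℝ≥0∞) • ν := by gcongr; exact ENNReal.inv_mul_le_one c
    _ = ν := one_smul _ ν

theorem le_rnDeriv_of_smul_restrict_le [SigmaFinite μ] [ν.HaveLebesgueDecomposition μ]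
    {s : Set α} {c : ℝ≥0∞} (h : c • μ.restrict s ≤ ν) :
    ∀ᵐ x ∂μ.restrict s, c ≤ ν.rnDeriv μ x := by
  rw [← Measure.restrict_toMeasurable_of_sFinite s] at h ⊢
  have hs : MeasurableSet (toMeasurable μ s) := measurableSet_toMeasurable μ s
  rw [← withDensity_const, ← withDensity_indicator hs] at h
  have h_le := le_rnDeriv_of_withDensity_le (aemeasurable_const.indicator hs) h
  filter_upwards [ae_restrict_of_ae h_le, ae_restrict_mem hs] with x hx hxs
  rwa [Set.indicator_of_mem hxs] at hx

theorem reverse_density_lower_bound_general (μ₁ μ₂ : Measure α) [SigmaFinite μ₁]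
    [μ₂.HaveLebesgueDecomposition μ₁] {Γ : Set α}
    [(μ₁.restrict Γ).HaveLebesgueDecomposition (μ₂.restrict Γ)] (N : ℝ≥0∞)
    (hac : μ₁.restrict Γ ≪ μ₂.restrict Γ)
    (hbound : ∀ᵐ x ∂(μ₂.restrict Γ), (μ₁.restrict Γ).rnDeriv (μ₂.restrict Γ) x ≤ N) :
    ∀ᵐ x ∂(μ₁.restrict Γ), N⁻¹ ≤ μ₂.rnDeriv μ₁ x := by
  have h_restrict : N⁻¹ • μ₁.restrict Γ ≤ μ₂.restrict Γ :=
    inv_smul_le_of_le_smul (le_smul_of_rnDeriv_le hac hbound)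
  exact le_rnDeriv_of_smul_restrict_le (h_restrict.trans Measure.restrict_le_self)

end

/-- A one-sided density bound yields a lower bound in the reverse direction: if on `Γ` the
measure `μ₁` is absolutely continuous with respect to `μ₂` with density `f = dμ₁/dμ₂ ≤ N`
(`μ₂`-a.e. on `Γ`), then the absolutely continuous part `μ̃₂` of `μ₂` with respect to `μ₁`
satisfies `dμ̃₂/dμ₁ ≥ 1/N` `μ₁`-a.e. on `Γ` (Mathlib's `Measure.rnDeriv` is the derivative
of the absolutely continuous part in the Lebesgue decomposition). -/
theorem reverse_density_lower_bound
    {E : Type*} [MeasurableSpace E]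
    (μ₁ μ₂ : Measure E) [IsFiniteMeasure μ₁] [IsFiniteMeasure μ₂]
    {Γ : Set E} (hΓ : MeasurableSet Γ)
    (N : ℝ≥0∞) (hN : 0 < N)
    (hac : μ₁.restrict Γ ≪ μ₂.restrict Γ)
    (hbound : ∀ᵐ x ∂(μ₂.restrict Γ), (μ₁.restrict Γ).rnDeriv (μ₂.restrict Γ) x ≤ N) :
    ∀ᵐ x ∂(μ₁.restrict Γ), N⁻¹ ≤ μ₂.rnDeriv μ₁ x := by
  exact reverse_density_lower_bound_general μ₁ μ₂ N hac hbound
end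

section
/- Let (Z, 𝒵) and (E, ℰ) be measurable spaces, let η be a Markov kernel from Z to E, let ν be a probability measure on Z, and let μ₁ be a probability measure on E. Denote by νη the mixture measure A ↦ ∫_Z η(z, A) ν(dz) on E. Then ∫_E min(d(νη)/dμ₁, 1) dμ₁ ≥ ∫_Z ( ∫_E min(dη(z,·)/dμ₁, 1) dμ₁ ) ν(dz), where d α/dμ₁ denotes the Radon–Nikodym derivative of the absolutely continuous part of α with respect to μ₁. That is, the Markov–Dobrushin overlap with a fixed measure is superadditive (concave) under mixtures. -/
open MeasureTheory
open scoped ENNReal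

/-!
Every measurable set `A` bounds the overlap of `α` and `μ` by `α A + μ Aᶜ`, and the set where
`dα/dμ < 1`, taken off a `μ`-null carrier of the singular part of `α`, attains the bound. For fixed
`A` the bound is affine in `α`, so the overlap is a minimum of affine functions of `α`, hence
concave in `α`.
-/

section Overlap

variable {E : Type*} [MeasurableSpace E] {α μ : Measure E}

lemma setLIntegral_rnDeriv_eq_measure_of_singularPart_eq_zero [α.HaveLebesgueDecomposition μ]
    {A : Set E} (hA : MeasurableSet A) (hsing : α.singularPart μ A = 0) :
    ∫⁻ x in A, α.rnDeriv μ x ∂μ = α A := by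
  conv_rhs => rw [α.haveLebesgueDecomposition_add μ]
  rw [Measure.add_apply, hsing, zero_add, withDensity_apply _ hA]

variable (α μ)

/-- The Markov–Dobrushin overlap of `α` with the reference measure `μ`. If `α` has no Lebesgue
decomposition with respect to `μ`, then `α.rnDeriv μ` and hence the overlap have the junk
value `0`. -/
noncomputable def markovDobrushinOverlap : ℝ≥0∞ :=
  ∫⁻ x, min (α.rnDeriv μ x) 1 ∂μ

lemma markovDobrushinOverlap_le_measure_add_measure_compl {A : Set E} (hA : MeasurableSet A) :
    markovDobrushinOverlap α μ ≤ α A + μ Aᶜ := by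
  rw [markovDobrushinOverlap, ← lintegral_add_compl _ hA]
  gcongr
  · exact (lintegral_mono fun x => min_le_left _ _).trans (Measure.setLIntegral_rnDeriv_le A)
  · exact (lintegral_mono fun x => min_le_right _ _).trans (setLIntegral_one _).le

lemma exists_measure_add_measure_compl_eq_markovDobrushinOverlap
    [α.HaveLebesgueDecomposition μ] :
    ∃ A, MeasurableSet A ∧ α A + μ Aᶜ = markovDobrushinOverlap α μ := by
  have hαμ := α.mutuallySingular_singularPart μ
  let S := hαμ.nullSet
  let A := S ∩ {x | α.rnDeriv μ x < 1}
  have hA : MeasurableSet A :=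
    hαμ.measurableSet_nullSet.inter (measurableSet_lt (α.measurable_rnDeriv μ) measurable_const)
  have hsing : α.singularPart μ A = 0 :=
    measure_mono_null Set.inter_subset_left hαμ.measure_nullSet
  have hS : ∀ᵐ x ∂μ, x ∈ S := hαμ.measure_compl_nullSet
  have hon : ∫⁻ x in A, min (α.rnDeriv μ x) 1 ∂μ = α A := by
    rw [← setLIntegral_rnDeriv_eq_measure_of_singularPart_eq_zero hA hsing]
    exact setLIntegral_congr_fun hA fun x hx => min_eq_left hx.2.le
  have hoff : ∫⁻ x in Aᶜ, min (α.rnDeriv μ x) 1 ∂μ = μ Aᶜ := by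
    rw [← setLIntegral_one]
    refine setLIntegral_congr_fun_ae hA.compl ?_
    filter_upwards [hS] with x hxS hxA
    exact min_eq_right (not_lt.1 fun hlt => hxA ⟨hxS, hlt⟩)
  exact ⟨A, hA, by rw [markovDobrushinOverlap, ← lintegral_add_compl _ hA, hon, hoff]⟩

end Overlap

theorem markov_dobrushin_overlap_superadditive_under_mixture_general
    {Z E : Type*} [MeasurableSpace Z] [MeasurableSpace E]
    (η : ProbabilityTheory.Kernel Z E) [ProbabilityTheory.IsSFiniteKernel η]
    (ν : Measure Z) (hν : ν Set.univ ≤ 1) (μ : Measure E) [SigmaFinite μ] :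
    ∫⁻ z, markovDobrushinOverlap (η z) μ ∂ν ≤ markovDobrushinOverlap (ν.bind η) μ := by
  have : IsFiniteMeasure ν := ⟨hν.trans_lt ENNReal.one_lt_top⟩
  obtain ⟨A, hA, hmin⟩ := exists_measure_add_measure_compl_eq_markovDobrushinOverlap (ν.bind η) μ
  calc ∫⁻ z, markovDobrushinOverlap (η z) μ ∂ν
      ≤ ∫⁻ z, (η z A + μ Aᶜ) ∂ν :=
        lintegral_mono fun z => markovDobrushinOverlap_le_measure_add_measure_compl (η z) μ hA
    _ = ν.bind η A + μ Aᶜ * ν Set.univ := by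
        rw [lintegral_add_right _ measurable_const, lintegral_const,
          Measure.bind_apply hA η.aemeasurable]
    _ ≤ ν.bind η A + μ Aᶜ := by gcongr; exact mul_le_of_le_one_right' hν
    _ = markovDobrushinOverlap (ν.bind η) μ := hmin

/-- The Markov–Dobrushin overlap with a fixed probability measure `μ₁` is superadditive
(concave) under mixtures: for a Markov kernel `η` from `Z` to `E` and a probability measure
`ν` on `Z`, the overlap of the mixture `νη = ∫ η(z,·) ν(dz)` with `μ₁` dominates the mixture
of the overlaps. Here `dα/dμ₁` is the Radon–Nikodym derivative of the absolutely continuous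
part of `α` with respect to `μ₁`. -/
theorem markov_dobrushin_overlap_superadditive_under_mixture
    {Z E : Type*} [MeasurableSpace Z] [MeasurableSpace E]
    (η : ProbabilityTheory.Kernel Z E) [ProbabilityTheory.IsMarkovKernel η]
    (ν : Measure Z) [IsProbabilityMeasure ν]
    (μ₁ : Measure E) [IsProbabilityMeasure μ₁] :
    ∫⁻ z, (∫⁻ x, min ((η z).rnDeriv μ₁ x) 1 ∂μ₁) ∂ν ≤
      ∫⁻ x, min ((ν.bind (fun z => η z)).rnDeriv μ₁ x) 1 ∂μ₁ :=
  markov_dobrushin_overlap_superadditive_under_mixture_general η ν prob_le_one μ₁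
end

section
/- Let ν⁰ be a finite measure on a measurable space (E, ℰ), and let (μ_n)_{n∈ℕ} and (μ′_n)_{n∈ℕ} be sequences of finite measures, all absolutely continuous with respect to ν⁰, such that for every measurable set A the sequences μ_n(A) and μ′_n(A) are nondecreasing in n and converge to μ(A) and μ′(A) respectively, where μ and μ′ are finite measures absolutely continuous with respect to ν⁰. Then ∫_E min(dμ_n/dν⁰, dμ′_n/dν⁰) dν⁰ → ∫_E min(dμ/dν⁰, dμ′/dν⁰) dν⁰ as n → ∞. -/
open MeasureTheory Filter
open scoped ENNReal

/-!
Restricting to a set of full `ν₀`-measure which carries no part of `μ` singular to `ν₀`, and hence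
no such part of any `μseq n ≤ μ`, turns integrals of densities over measurable sets into values of
the measures. There, setwise monotonicity becomes almost everywhere monotonicity of the densities,
and monotone convergence identifies the supremum of the densities with the density of `μ`. So the
densities, and with them their minima, increase almost everywhere, and monotone convergence applies
once more to the overlap integrals.
-/

section Density

variable {E : Type*} [MeasurableSpace E] {μ ρ ν : Measure E} {μseq : ℕ → Measure E}

theorem monotone_measure_iff_setwise {ι : Type*} [Preorder ι] {ρs : ι → Measure E} :
    Monotone ρs ↔ ∀ A : Set E, MeasurableSet A → Monotone fun i => ρs i A :=
  ⟨fun h A _ _ _ hij => h hij A, fun h _ _ hij => Measure.le_iff.2 fun A hA => h A hA hij⟩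

theorem le_of_monotone_of_tendsto_setwise {ι : Type*} [Preorder ι] [IsDirectedOrder ι]
    {ρs : ι → Measure E} (hmono : Monotone ρs)
    (hlim : ∀ A : Set E, MeasurableSet A → Tendsto (fun i => ρs i A) atTop (nhds (μ A))) (i : ι) :
    ρs i ≤ μ :=
  Measure.le_iff.2 fun A hA =>
    (monotone_measure_iff_setwise.1 hmono A hA).ge_of_tendsto (hlim A hA) i

theorem exists_conull_restrict_absolutelyContinuous (μ ν : Measure E)
    [μ.HaveLebesgueDecomposition ν] :
    ∃ t, MeasurableSet t ∧ ν tᶜ = 0 ∧ μ.restrict t ≪ ν := by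
  obtain ⟨t, ht, hsing, hνt⟩ := μ.mutuallySingular_singularPart ν
  have hrestrict : μ.restrict t = (ν.withDensity (μ.rnDeriv ν)).restrict t := by
    conv_lhs => rw [μ.haveLebesgueDecomposition_add ν]
    rw [Measure.restrict_add, Measure.restrict_eq_zero.2 hsing, zero_add]
  refine ⟨t, ht, hνt, hrestrict ▸ ?_⟩
  exact Measure.restrict_le_self.absolutelyContinuous.trans (withDensity_absolutelyContinuous _ _)

theorem setLIntegral_rnDeriv_eq_measure_inter [μ.HaveLebesgueDecomposition ν] {s t : Set E}
    (hs : MeasurableSet s) (ht : MeasurableSet t) (hνt : ν tᶜ = 0) (hμt : μ.restrict t ≪ ν) :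
    ∫⁻ x in s, μ.rnDeriv ν x ∂ν = μ (s ∩ t) := by
  have hsing : μ.singularPart ν (s ∩ t) = 0 := by
    have hnull : (μ.singularPart ν).restrict t = 0 :=
      Measure.eq_zero_of_absolutelyContinuous_of_mutuallySingular
        ((Measure.restrict_mono_measure (μ.singularPart_le ν) t).absolutelyContinuous.trans hμt)
        ((μ.mutuallySingular_singularPart ν).restrict t)
    rw [← Measure.restrict_apply hs, hnull, Measure.coe_zero, Pi.zero_apply]
  calc ∫⁻ x in s, μ.rnDeriv ν x ∂ν
      = ∫⁻ x in s ∩ t, μ.rnDeriv ν x ∂ν :=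
        setLIntegral_congr (inter_ae_eq_left_of_ae_eq_univ (ae_eq_univ.2 hνt)).symm
    _ = μ.singularPart ν (s ∩ t) + ν.withDensity (μ.rnDeriv ν) (s ∩ t) := by
        rw [hsing, zero_add, withDensity_apply _ (hs.inter ht)]
    _ = μ (s ∩ t) := by
        rw [← Measure.add_apply, μ.singularPart_add_rnDeriv ν]

theorem exists_setLIntegral_rnDeriv_eq_measure_inter_of_le (μ ν : Measure E)
    [μ.HaveLebesgueDecomposition ν] :
    ∃ t, MeasurableSet t ∧ ∀ ρ ≤ μ, ρ.HaveLebesgueDecomposition ν →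
      ∀ s, MeasurableSet s → ∫⁻ x in s, ρ.rnDeriv ν x ∂ν = ρ (s ∩ t) := by
  obtain ⟨t, ht, hνt, hμt⟩ := exists_conull_restrict_absolutelyContinuous μ ν
  refine ⟨t, ht, fun ρ hρ _ s hs => setLIntegral_rnDeriv_eq_measure_inter hs ht hνt ?_⟩
  exact (Measure.restrict_mono_measure hρ t).absolutelyContinuous.trans hμt

variable [SigmaFinite ν]

theorem rnDeriv_ae_le_of_le [ρ.HaveLebesgueDecomposition ν] [μ.HaveLebesgueDecomposition ν]
    (h : ρ ≤ μ) : ρ.rnDeriv ν ≤ᵐ[ν] μ.rnDeriv ν := by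
  obtain ⟨t, -, hdensity⟩ := exists_setLIntegral_rnDeriv_eq_measure_inter_of_le μ ν
  refine ae_le_of_forall_setLIntegral_le_of_sigmaFinite (ρ.measurable_rnDeriv ν) fun s hs _ => ?_
  rw [hdensity ρ h inferInstance s hs, hdensity μ le_rfl inferInstance s hs]
  exact h _

variable [∀ n, (μseq n).HaveLebesgueDecomposition ν]

theorem ae_monotone_rnDeriv (hmono : Monotone μseq) :
    ∀ᵐ x ∂ν, Monotone fun n => (μseq n).rnDeriv ν x := by
  have hstep (n : ℕ) : (μseq n).rnDeriv ν ≤ᵐ[ν] (μseq (n + 1)).rnDeriv ν :=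
    rnDeriv_ae_le_of_le (hmono n.le_succ)
  filter_upwards [ae_all_iff.2 hstep] with x hx
  exact monotone_nat_of_le_succ hx

theorem ae_tendsto_rnDeriv_of_monotone [μ.HaveLebesgueDecomposition ν] (hmono : Monotone μseq)
    (hlim : ∀ A : Set E, MeasurableSet A → Tendsto (fun n => μseq n A) atTop (nhds (μ A))) :
    ∀ᵐ x ∂ν, Tendsto (fun n => (μseq n).rnDeriv ν x) atTop (nhds (μ.rnDeriv ν x)) := by
  obtain ⟨t, ht, hdensity⟩ := exists_setLIntegral_rnDeriv_eq_measure_inter_of_le μ ν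
  have hle := le_of_monotone_of_tendsto_setwise hmono hlim
  have hdensity_mono := ae_monotone_rnDeriv (ν := ν) hmono
  have hsup : (fun x => ⨆ n, (μseq n).rnDeriv ν x) =ᵐ[ν] μ.rnDeriv ν := by
    refine ae_eq_of_forall_setLIntegral_eq_of_sigmaFinite
      (.iSup fun n => (μseq n).measurable_rnDeriv ν) (μ.measurable_rnDeriv ν) fun s hs _ => ?_
    calc ∫⁻ x in s, ⨆ n, (μseq n).rnDeriv ν x ∂ν
        = ⨆ n, ∫⁻ x in s, (μseq n).rnDeriv ν x ∂ν :=
          lintegral_iSup' (fun n => ((μseq n).measurable_rnDeriv ν).aemeasurable)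
            (ae_restrict_of_ae hdensity_mono)
      _ = ⨆ n, μseq n (s ∩ t) := iSup_congr fun n => hdensity _ (hle n) inferInstance s hs
      _ = μ (s ∩ t) := iSup_eq_of_tendsto (fun _ _ hij => hmono hij _) (hlim _ (hs.inter ht))
      _ = ∫⁻ x in s, μ.rnDeriv ν x ∂ν := (hdensity μ le_rfl inferInstance s hs).symm
  filter_upwards [hdensity_mono, hsup] with x hx hxsup
  exact hxsup ▸ tendsto_atTop_iSup hx

end Density

theorem markov_dobrushin_overlap_tendsto_of_setwise_monotone_general
    {E : Type*} [MeasurableSpace E] {ν₀ : Measure E} [SigmaFinite ν₀]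
    {μseq μ'seq : ℕ → Measure E} {μ μ' : Measure E}
    [∀ n, (μseq n).HaveLebesgueDecomposition ν₀] [∀ n, (μ'seq n).HaveLebesgueDecomposition ν₀]
    [μ.HaveLebesgueDecomposition ν₀] [μ'.HaveLebesgueDecomposition ν₀]
    (hmono : Monotone μseq) (h'mono : Monotone μ'seq)
    (hlim : ∀ A : Set E, MeasurableSet A →
      Tendsto (fun n => μseq n A) atTop (nhds (μ A)))
    (h'lim : ∀ A : Set E, MeasurableSet A →
      Tendsto (fun n => μ'seq n A) atTop (nhds (μ' A))) :
    Tendsto (fun n => ∫⁻ x, min ((μseq n).rnDeriv ν₀ x) ((μ'seq n).rnDeriv ν₀ x) ∂ν₀)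
      atTop (nhds (∫⁻ x, min (μ.rnDeriv ν₀ x) (μ'.rnDeriv ν₀ x) ∂ν₀)) := by
  refine lintegral_tendsto_of_tendsto_of_monotone
    (fun n => (((μseq n).measurable_rnDeriv ν₀).min ((μ'seq n).measurable_rnDeriv ν₀)).aemeasurable)
    ?_ ?_
  · filter_upwards [ae_monotone_rnDeriv hmono, ae_monotone_rnDeriv h'mono] with x hx hx'
    exact hx.min hx'
  · filter_upwards [ae_tendsto_rnDeriv_of_monotone hmono hlim,
      ae_tendsto_rnDeriv_of_monotone h'mono h'lim] with x hx hx'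
    exact hx.min hx'

/-- If two sequences of finite measures dominated by a finite measure `ν⁰` increase setwise
to finite measures `μ` and `μ'` (also dominated by `ν⁰`), then the Markov–Dobrushin overlap
integrals `∫ min(dμₙ/dν⁰, dμ'ₙ/dν⁰) dν⁰` converge to `∫ min(dμ/dν⁰, dμ'/dν⁰) dν⁰`. -/
theorem markov_dobrushin_overlap_tendsto_of_setwise_monotone
    {E : Type*} [MeasurableSpace E]
    (ν₀ : Measure E) [IsFiniteMeasure ν₀]
    (μseq μ'seq : ℕ → Measure E)
    [∀ n, IsFiniteMeasure (μseq n)] [∀ n, IsFiniteMeasure (μ'seq n)]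
    (μ μ' : Measure E) [IsFiniteMeasure μ] [IsFiniteMeasure μ']
    (hseq : ∀ n, μseq n ≪ ν₀) (h'seq : ∀ n, μ'seq n ≪ ν₀)
    (hμ : μ ≪ ν₀) (hμ' : μ' ≪ ν₀)
    (hmono : ∀ A : Set E, MeasurableSet A → Monotone fun n => μseq n A)
    (h'mono : ∀ A : Set E, MeasurableSet A → Monotone fun n => μ'seq n A)
    (hlim : ∀ A : Set E, MeasurableSet A →
      Tendsto (fun n => μseq n A) atTop (nhds (μ A)))
    (h'lim : ∀ A : Set E, MeasurableSet A →
      Tendsto (fun n => μ'seq n A) atTop (nhds (μ' A))) :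
    Tendsto (fun n => ∫⁻ x, min ((μseq n).rnDeriv ν₀ x) ((μ'seq n).rnDeriv ν₀ x) ∂ν₀)
      atTop (nhds (∫⁻ x, min (μ.rnDeriv ν₀ x) (μ'.rnDeriv ν₀ x) ∂ν₀)) :=
  markov_dobrushin_overlap_tendsto_of_setwise_monotone_general
    (monotone_measure_iff_setwise.2 hmono) (monotone_measure_iff_setwise.2 h'mono) hlim h'lim
end

section
/- Let (Z, 𝒵) and (E, ℰ) be measurable spaces, let η be a Markov kernel from Z to E, let ν be a probability measure on Z, let D ∈ 𝒵, let μ₁ be a probability measure on E, and let c > 0. Assume that for every z ∈ D the Markov–Dobrushin overlap satisfies ∫_E min(dη(z,·)/dμ₁, 1) dμ₁ ≥ c. Then the mixture νη (defined by νη(A) = ∫_Z η(z, A) ν(dz)) satisfies ∫_E min(d(νη)/dμ₁, 1) dμ₁ ≥ c · ν(D). (This is the abstract form of the corollary deriving a Markov–Dobrushin condition for the time-one marginals of a diffusion from the Markov–Dobrushin condition for the conditional laws given the position at an intermediate time ε, with ν the law of X_ε and D the ball where the Harnack-based bound applies.) -/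
open MeasureTheory
open scoped ENNReal

/-!
The overlap of `μ` and `ν` is the total mass of their lattice infimum `μ ⊓ ν`, and `(μ ⊓ ν) s` is
the infimum of `μ (s ∩ t) + ν (s \ t)` over measurable `t`. For fixed `t` this sum is linear in the
pair `(μ, ν)`, so the infimum is concave: the overlap of two mixtures is at least the mixture of
the overlaps.
-/

section Infimum

variable {α : Type*} [MeasurableSpace α]

theorem measure_inf_le_restrict_add_restrict_compl (μ ν : Measure α) {t : Set α}
    (ht : MeasurableSet t) :
    μ ⊓ ν ≤ μ.restrict t + ν.restrict tᶜ :=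
  calc μ ⊓ ν = (μ ⊓ ν).restrict t + (μ ⊓ ν).restrict tᶜ :=
        (Measure.restrict_add_restrict_compl ht).symm
    _ ≤ μ.restrict t + ν.restrict tᶜ :=
        add_le_add (Measure.restrict_mono subset_rfl inf_le_left)
          (Measure.restrict_mono subset_rfl inf_le_right)

theorem measure_inf_apply_eq_iInf_measurableSet (μ ν : Measure α) {s : Set α}
    (hs : MeasurableSet s) :
    (μ ⊓ ν) s = ⨅ (t : Set α) (_ : MeasurableSet t), μ (s ∩ t) + ν (s \ t) := by
  apply le_antisymm
  · refine le_iInf₂ fun t ht => ?_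
    simpa only [Measure.add_apply, Measure.restrict_apply hs, Set.sdiff_eq] using
      measure_inf_le_restrict_add_restrict_compl μ ν ht s
  · rw [Measure.inf_apply hs]
    refine le_sInf ?_
    rintro _ ⟨t, rfl⟩
    refine (iInf₂_le (toMeasurable μ (t ∩ s)) (measurableSet_toMeasurable _ _)).trans ?_
    gcongr ?_ + ν ?_
    · exact (measure_mono Set.inter_subset_right).trans (measure_toMeasurable _).le
    · exact fun x hx => ⟨fun hxt => hx.2 (subset_toMeasurable μ _ ⟨hxt, hx.1⟩), hx.1⟩

theorem withDensity_inf_withDensity (μ : Measure α) {f g : α → ℝ≥0∞} (hf : Measurable f)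
    (hg : Measurable g) :
    μ.withDensity f ⊓ μ.withDensity g = μ.withDensity fun x => min (f x) (g x) := by
  apply le_antisymm
  · have ht : MeasurableSet {x | f x ≤ g x} := measurableSet_le hf hg
    refine (measure_inf_le_restrict_add_restrict_compl _ _ ht).trans ?_
    rw [← Measure.restrict_add_restrict_compl (μ := μ.withDensity fun x => min (f x) (g x)) ht]
    simp only [restrict_withDensity ht, restrict_withDensity ht.compl]
    gcongr ?_ + ?_
    · exact withDensity_mono (ae_restrict_of_forall_mem ht fun x hx => le_min le_rfl hx)
    · exact withDensity_mono (ae_restrict_of_forall_mem ht.compl fun x (hx : ¬f x ≤ g x) =>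
        le_min (not_le.mp hx).le le_rfl)
  · exact le_inf (withDensity_mono (ae_of_all _ fun _ => min_le_left _ _))
      (withDensity_mono (ae_of_all _ fun _ => min_le_right _ _))

theorem withDensity_rnDeriv_inf (μ ν : Measure α) :
    ν.withDensity (μ.rnDeriv ν) ⊓ ν = ν.withDensity fun x => min (μ.rnDeriv ν x) 1 := by
  simpa only [withDensity_const, one_smul] using
    withDensity_inf_withDensity ν (Measure.measurable_rnDeriv μ ν)
      (measurable_const (a := (1 : ℝ≥0∞)))

theorem measure_inf_le_withDensity_rnDeriv (μ ν : Measure α) [μ.HaveLebesgueDecomposition ν] :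
    μ ⊓ ν ≤ ν.withDensity (μ.rnDeriv ν) := by
  obtain ⟨t, ht, hμt, hνt⟩ := Measure.mutuallySingular_singularPart μ ν
  have hμ : μ.restrict t = (ν.withDensity (μ.rnDeriv ν)).restrict t := by
    conv_lhs => rw [← Measure.singularPart_add_rnDeriv μ ν]
    rw [Measure.restrict_add, Measure.restrict_eq_zero.mpr hμt, zero_add]
  calc μ ⊓ ν ≤ μ.restrict t + ν.restrict tᶜ := measure_inf_le_restrict_add_restrict_compl μ ν ht
    _ = (ν.withDensity (μ.rnDeriv ν)).restrict t := by
        rw [Measure.restrict_eq_zero.mpr hνt, add_zero, hμ]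
    _ ≤ ν.withDensity (μ.rnDeriv ν) := Measure.restrict_le_self

theorem lintegral_min_rnDeriv_one_le_measure_inf_univ (μ ν : Measure α) :
    ∫⁻ x, min (μ.rnDeriv ν x) 1 ∂ν ≤ (μ ⊓ ν) Set.univ := by
  rw [← setLIntegral_univ, ← withDensity_apply _ .univ, ← withDensity_rnDeriv_inf]
  exact inf_le_inf_right ν (Measure.withDensity_rnDeriv_le μ ν) Set.univ

theorem measure_inf_univ_eq_lintegral_min_rnDeriv_one (μ ν : Measure α)
    [μ.HaveLebesgueDecomposition ν] :
    (μ ⊓ ν) Set.univ = ∫⁻ x, min (μ.rnDeriv ν x) 1 ∂ν := by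
  refine le_antisymm ?_ (lintegral_min_rnDeriv_one_le_measure_inf_univ μ ν)
  rw [← setLIntegral_univ, ← withDensity_apply _ .univ, ← withDensity_rnDeriv_inf]
  exact le_inf (measure_inf_le_withDensity_rnDeriv μ ν) inf_le_right Set.univ

end Infimum

section Mixture

variable {Z E : Type*} [MeasurableSpace Z] [MeasurableSpace E]

theorem lintegral_inf_apply_le_bind_inf_bind_apply {ν : Measure Z} {η κ : Z → Measure E}
    (hη : AEMeasurable η ν) (hκ : AEMeasurable κ ν) {s : Set E} (hs : MeasurableSet s) :
    ∫⁻ z, (η z ⊓ κ z) s ∂ν ≤ (ν.bind η ⊓ ν.bind κ) s := by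
  rw [measure_inf_apply_eq_iInf_measurableSet _ _ hs]
  refine le_iInf₂ fun t ht => ?_
  calc ∫⁻ z, (η z ⊓ κ z) s ∂ν ≤ ∫⁻ z, η z (s ∩ t) + κ z (s \ t) ∂ν :=
        lintegral_mono fun z =>
          (measure_inf_apply_eq_iInf_measurableSet _ _ hs).trans_le (iInf₂_le t ht)
    _ = ν.bind η (s ∩ t) + ν.bind κ (s \ t) := by
        have hη_inter : AEMeasurable (fun z => η z (s ∩ t)) ν :=
          (Measure.measurable_coe (hs.inter ht)).comp_aemeasurable hη
        rw [lintegral_add_left' hη_inter, Measure.bind_apply (hs.inter ht) hη,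
          Measure.bind_apply (hs.diff ht) hκ]

theorem markov_dobrushin_for_mixture_general (η : ProbabilityTheory.Kernel Z E)
    [ProbabilityTheory.IsSFiniteKernel η] (ν : Measure Z) [IsProbabilityMeasure ν] {D : Set Z}
    (hD : MeasurableSet D) (μ₁ : Measure E) [SigmaFinite μ₁] (c : ℝ≥0∞)
    (h : ∀ z ∈ D, c ≤ ∫⁻ x, min ((η z).rnDeriv μ₁ x) 1 ∂μ₁) :
    c * ν D ≤ ∫⁻ x, min ((ν.bind η).rnDeriv μ₁ x) 1 ∂μ₁ :=
  calc c * ν D = ∫⁻ _ in D, c ∂ν := (setLIntegral_const D c).symm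
    _ ≤ ∫⁻ z in D, (η z ⊓ μ₁) Set.univ ∂ν :=
        setLIntegral_mono' hD fun z hz =>
          (h z hz).trans (lintegral_min_rnDeriv_one_le_measure_inf_univ (η z) μ₁)
    _ ≤ ∫⁻ z, (η z ⊓ μ₁) Set.univ ∂ν := setLIntegral_le_lintegral D _
    _ ≤ (ν.bind η ⊓ ν.bind fun _ => μ₁) Set.univ :=
        lintegral_inf_apply_le_bind_inf_bind_apply η.aemeasurable aemeasurable_const .univ
    _ = ∫⁻ x, min ((ν.bind η).rnDeriv μ₁ x) 1 ∂μ₁ := by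
        rw [Measure.bind_const, measure_univ (μ := ν), one_smul,
          measure_inf_univ_eq_lintegral_min_rnDeriv_one]

end Mixture

/-- Abstract form of the corollary deriving a Markov–Dobrushin condition for mixtures: if the
Markov–Dobrushin overlap of `η(z,·)` with `μ₁` is at least `c` for every `z` in a measurable
set `D`, then the mixture `νη = ∫ η(z,·) ν(dz)` satisfies
`∫ min(d(νη)/dμ₁, 1) dμ₁ ≥ c · ν(D)`. -/
theorem markov_dobrushin_for_mixture
    {Z E : Type*} [MeasurableSpace Z] [MeasurableSpace E]
    (η : ProbabilityTheory.Kernel Z E) [ProbabilityTheory.IsMarkovKernel η]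
    (ν : Measure Z) [IsProbabilityMeasure ν] {D : Set Z} (hD : MeasurableSet D)
    (μ₁ : Measure E) [IsProbabilityMeasure μ₁] (c : ℝ≥0∞) (hc : 0 < c)
    (h : ∀ z ∈ D, c ≤ ∫⁻ x, min ((η z).rnDeriv μ₁ x) 1 ∂μ₁) :
    c * ν D ≤ ∫⁻ x, min ((ν.bind (fun z => η z)).rnDeriv μ₁ x) 1 ∂μ₁ :=
  markov_dobrushin_for_mixture_general η ν hD μ₁ c h
end
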